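/- arXiv:1105.2432 — 2 statements merged into one kernel-verified Lean document; each statement's English description precedes it below -/
import Mathlib

section
/- Let G be a finite strategic game (all strategy sets are finite). Then the selfishness level of G is finite if and only if G has a stable social optimum. In particular, if G has a unique social optimum, then its selfishness level is finite. -/
open Finset
open scoped ENNReal

/-- A strategic game with `n` players: each player `i` has a nonempty strategy
set `S i` and a real-valued payoff function `p i` on joint strategies. -/
structure Game (n : ℕ) where
  S : Fin n → Type
  ne : ∀ i, Nonempty (S i)
  p : Fin n → ((j : Fin n) → S j) → ℝ

namespace Game

variable {n : ℕ}

/-- The social welfare of a joint strategy. -/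
def SW (G : Game n) (s : (j : Fin n) → G.S j) : ℝ := ∑ i, G.p i s

/-- A joint strategy is a social optimum if it maximizes the social welfare. -/
def SocialOptimum (G : Game n) (s : (j : Fin n) → G.S j) : Prop :=
  ∀ t, G.SW t ≤ G.SW s

/-- A joint strategy is a (pure) Nash equilibrium if no unilateral deviation is profitable. -/
def NashEq (G : Game n) (s : (j : Fin n) → G.S j) : Prop :=
  ∀ (i : Fin n) (s' : G.S i), G.p i (Function.update s i s') ≤ G.p i s

/-- The altruistic version `G(α)` of a game `G`. -/
def alt (G : Game n) (α : ℝ) : Game n where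
  S := G.S
  ne := G.ne
  p := fun i s => G.p i s + α * G.SW s

/-- `G` is `α`-selfish if some pure Nash equilibrium of `G(α)` is a social optimum of `G`. -/
def Selfish (G : Game n) (α : ℝ) : Prop :=
  ∃ s, (G.alt α).NashEq s ∧ G.SocialOptimum s

/-- The selfishness level of `G`: the infimum of the nonnegative `α` for which `G`
is `α`-selfish (`⊤` if there is no such `α`). -/
noncomputable def selfishnessLevel (G : Game n) : ℝ≥0∞ :=
  sInf {x : ℝ≥0∞ | ∃ α : ℝ, 0 ≤ α ∧ G.Selfish α ∧ x = ENNReal.ofReal α}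

/-- A social optimum is stable if no player profits from a unilateral deviation
to another social optimum. -/
def StableOptimum (G : Game n) (s : (j : Fin n) → G.S j) : Prop :=
  G.SocialOptimum s ∧ ∀ (i : Fin n) (s' : G.S i),
    G.SocialOptimum (Function.update s i s') →
      G.p i (Function.update s i s') ≤ G.p i s

/-- The appeal factor of a unilateral deviation `s'` of player `i` from `s`. -/
noncomputable def AF (G : Game n) (s : (j : Fin n) → G.S j) (i : Fin n) (s' : G.S i) : ℝ :=
  (G.p i (Function.update s i s') - G.p i s) /
    (G.SW s - G.SW (Function.update s i s'))

end Game

/-!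
For `α ≥ 0`, a social optimum `s` is a Nash equilibrium of `G(α)` exactly when it is stable and
every appeal factor at `s` is at most `α`: a deviation to another optimum leaves the altruistic
bonus unchanged, so only stability matters, while a deviation to a non-optimum loses a positive
amount of welfare, and `α` times that loss must outweigh the gain in payoff. Hence the selfishness
level is finite iff the appeal factors are bounded at some stable social optimum.
-/

namespace Game

variable {n : ℕ} {G : Game n} {s t : (j : Fin n) → G.S j} {i : Fin n} {s' : G.S i} {α : ℝ}

theorem SocialOptimum.iff_SW_eq (hs : G.SocialOptimum s) :
    G.SocialOptimum t ↔ G.SW t = G.SW s :=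
  ⟨fun ht => le_antisymm (hs t) (ht s), fun h u => h ▸ hs u⟩

theorem SocialOptimum.SW_lt_of_not (hs : G.SocialOptimum s) (ht : ¬ G.SocialOptimum t) :
    G.SW t < G.SW s :=
  (hs t).lt_of_ne (mt hs.iff_SW_eq.mpr ht)

theorem SocialOptimum.stableOptimum_of_unique (hs : G.SocialOptimum s)
    (huniq : ∀ t, G.SocialOptimum t → t = s) : G.StableOptimum s :=
  ⟨hs, fun i _ ht => (congrArg (G.p i) (huniq _ ht)).le⟩

theorem AF_le_iff (h : G.SW (Function.update s i s') < G.SW s) :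
    G.AF s i s' ≤ α ↔
      (G.alt α).p i (Function.update s i s') ≤ (G.alt α).p i s := by
  rw [AF, div_le_iff₀ (sub_pos.mpr h)]
  simp only [alt]
  constructor <;> intro <;> linarith

theorem alt_p_le_iff_of_SW_eq (h : G.SW t = G.SW s) :
    (G.alt α).p i t ≤ (G.alt α).p i s ↔ G.p i t ≤ G.p i s := by
  simp only [alt, h, add_le_add_iff_right]

theorem SocialOptimum.alt_nashEq_iff (hs : G.SocialOptimum s) (hα : 0 ≤ α) :
    (G.alt α).NashEq s ↔ G.StableOptimum s ∧ ∀ i s', G.AF s i s' ≤ α := by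
  constructor
  · intro hnash
    refine ⟨⟨hs, fun i s' ht => ?_⟩, fun i s' => ?_⟩
    · exact (alt_p_le_iff_of_SW_eq (hs.iff_SW_eq.mp ht)).mp (hnash i s')
    · by_cases ht : G.SocialOptimum (Function.update s i s')
      · -- The welfare loss is `0`, so the appeal factor is `x / 0 = 0`.
        simpa [AF, hs.iff_SW_eq.mp ht] using hα
      · exact (AF_le_iff (hs.SW_lt_of_not ht)).mpr (hnash i s')
  · rintro ⟨hstable, hAF⟩ i s'
    by_cases ht : G.SocialOptimum (Function.update s i s')
    · exact (alt_p_le_iff_of_SW_eq (hs.iff_SW_eq.mp ht)).mpr (hstable.2 i s' ht)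
    · exact (AF_le_iff (hs.SW_lt_of_not ht)).mp (hAF i s')

theorem selfish_iff_exists_AF_le (hα : 0 ≤ α) :
    G.Selfish α ↔ ∃ s, G.StableOptimum s ∧ ∀ i s', G.AF s i s' ≤ α :=
  exists_congr fun _ =>
    ⟨fun ⟨hnash, hs⟩ => (hs.alt_nashEq_iff hα).mp hnash,
      fun h => ⟨(h.1.1.alt_nashEq_iff hα).mpr h, h.1.1⟩⟩

theorem selfishnessLevel_ne_top_iff_exists_selfish :
    G.selfishnessLevel ≠ ⊤ ↔ ∃ α : ℝ, 0 ≤ α ∧ G.Selfish α := by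
  rw [← lt_top_iff_ne_top, selfishnessLevel, sInf_lt_iff]
  constructor
  · rintro ⟨_, ⟨α, hα, hself, _⟩, _⟩
    exact ⟨α, hα, hself⟩
  · rintro ⟨α, hα, hself⟩
    exact ⟨_, ⟨α, hα, hself, rfl⟩, ENNReal.ofReal_lt_top⟩

theorem exists_nonneg_AF_le_iff_bddAbove :
    (∃ α, 0 ≤ α ∧ ∀ i s', G.AF s i s' ≤ α) ↔ ∀ i, BddAbove (Set.range (G.AF s i)) := by
  constructor
  · rintro ⟨α, -, hα⟩ i
    exact ⟨α, Set.forall_mem_range.mpr (hα i)⟩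
  · intro h
    choose M hM using h
    obtain ⟨B, hB⟩ := Finite.bddAbove_range M
    refine ⟨max B 0, le_max_right B 0, fun i s' => ?_⟩
    calc G.AF s i s' ≤ M i := hM i ⟨s', rfl⟩
      _ ≤ B := hB ⟨i, rfl⟩
      _ ≤ max B 0 := le_max_left B 0

theorem selfishnessLevel_ne_top_iff_exists_bddAbove_AF :
    G.selfishnessLevel ≠ ⊤ ↔
      ∃ s, G.StableOptimum s ∧ ∀ i, BddAbove (Set.range (G.AF s i)) := by
  simp only [selfishnessLevel_ne_top_iff_exists_selfish, ← exists_nonneg_AF_le_iff_bddAbove]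
  constructor
  · rintro ⟨α, hα, hself⟩
    obtain ⟨s, hs, hAF⟩ := (selfish_iff_exists_AF_le hα).mp hself
    exact ⟨s, hs, α, hα, hAF⟩
  · rintro ⟨s, hs, α, hα, hAF⟩
    exact ⟨α, hα, (selfish_iff_exists_AF_le hα).mpr ⟨s, hs, hAF⟩⟩

end Game

theorem finite_selfishnessLevel_iff_stableOptimum_general {n : ℕ} (G : Game n)
    (hbdd : ∀ s, G.StableOptimum s → ∀ i, BddAbove (Set.range (G.AF s i))) :
    (G.selfishnessLevel ≠ ⊤ ↔ ∃ s, G.StableOptimum s) ∧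
    ((∃! s, G.SocialOptimum s) → G.selfishnessLevel ≠ ⊤) := by
  have hiff : G.selfishnessLevel ≠ ⊤ ↔ ∃ s, G.StableOptimum s :=
    Game.selfishnessLevel_ne_top_iff_exists_bddAbove_AF.trans <|
      exists_congr fun s => and_iff_left_of_imp (hbdd s)
  refine ⟨hiff, ?_⟩
  rintro ⟨s, hs, huniq⟩
  exact hiff.mpr ⟨s, hs.stableOptimum_of_unique huniq⟩

/-- a finite game has finite selfishness level iff it has a stable social
optimum; in particular a finite game with a unique social optimum has finite
selfishness level. -/
theorem finite_selfishnessLevel_iff_stableOptimum {n : ℕ} (G : Game n)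
    (hfin : ∀ i, Finite (G.S i)) :
    (G.selfishnessLevel ≠ ⊤ ↔ ∃ s, G.StableOptimum s) ∧
    ((∃! s, G.SocialOptimum s) → G.selfishnessLevel ≠ ⊤) := by
  exact finite_selfishnessLevel_iff_stableOptimum_general G fun s _ i =>
    (Set.finite_range (G.AF s i)).bddAbove
end

section
/- For every n ≥ 2, the selfishness level of the n-players Prisoner's Dilemma game, in which each player i ∈ {1,...,n} has strategy set {0,1} and payoff p_i(s) := 1 − s_i + 2·Σ_{j ≠ i} s_j, equals 1/(2n − 3). -/
open Finset
open scoped ENNReal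

/-- The `n`-players Prisoner's Dilemma game: each player has strategies `{0, 1}` and
payoff `pᵢ(s) = 1 - sᵢ + 2·∑_{j ≠ i} sⱼ`. -/
def prisonersDilemma (n : ℕ) : Game n where
  S := fun _ => Fin 2
  ne := fun _ => inferInstance
  p := fun i s => 1 - ((s i : ℕ) : ℝ) + 2 * ∑ j ∈ Finset.univ.erase i, ((s j : ℕ) : ℝ)

/-!
A social optimum `s` of `G` is a Nash equilibrium of `G(α)` iff no deviation from `s` to another
social optimum is profitable and `α` is at least the appeal factor, private gain divided by loss of
welfare, of every other deviation. In the Prisoner's Dilemma the social welfare is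
`n + (2n - 3) ∑ⱼ sⱼ`, so for `n ≥ 2` full cooperation is the only social optimum, and a player who
defects from it gains `1` while society loses `2n - 3`.
-/

theorem sum_comp_update {ι β M : Type*} [Fintype ι] [DecidableEq ι] [AddCommGroup M]
    (f : β → M) (s : ι → β) (i : ι) (a : β) :
    ∑ j, f (Function.update s i a j) = ∑ j, f (s j) + (f a - f (s i)) := by
  have hcomp (j : ι) : f (Function.update s i a j) = Function.update (f ∘ s) i (f a) j :=
    congrFun (Function.comp_update f s i a) j
  simp only [hcomp, sum_update_of_mem (mem_univ i), ← erase_eq, Function.comp_apply,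
    sum_erase_eq_sub (mem_univ i)]
  abel

namespace Game

variable {n : ℕ} {G : Game n} {α c : ℝ} {s : ∀ j, G.S j}

theorem nashEq_alt_iff :
    (G.alt α).NashEq s ↔ ∀ (i : Fin n) (s' : G.S i),
      G.p i (Function.update s i s') - G.p i s ≤
        α * (G.SW s - G.SW (Function.update s i s')) := by
  refine forall₂_congr fun i s' => ?_
  change G.p i (Function.update s i s') + α * G.SW (Function.update s i s') ≤
    G.p i s + α * G.SW s ↔ _
  rw [mul_sub, sub_le_sub_iff, add_comm (α * G.SW s)]

theorem SocialOptimum.SW_eq {t : ∀ j, G.S j} (hs : G.SocialOptimum s) (ht : G.SocialOptimum t) :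
    G.SW s = G.SW t :=
  le_antisymm (ht s) (hs t)

theorem SocialOptimum.SW_lt {t : ∀ j, G.S j} (hs : G.SocialOptimum s) (ht : ¬G.SocialOptimum t) :
    G.SW t < G.SW s :=
  lt_of_not_ge fun h => ht fun u => (hs u).trans h

-- A deviation to another social optimum has no loss of welfare, so that `AF` divides by `0` there.
theorem SocialOptimum.nashEq_alt_iff (hs : G.SocialOptimum s) :
    (G.alt α).NashEq s ↔ G.StableOptimum s ∧ ∀ (i : Fin n) (s' : G.S i),
      ¬G.SocialOptimum (Function.update s i s') → G.AF s i s' ≤ α := by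
  rw [Game.nashEq_alt_iff, StableOptimum, and_iff_right hs, ← forall_and]
  refine forall_congr' fun i => ?_
  rw [← forall_and]
  refine forall_congr' fun s' => ?_
  by_cases ht : G.SocialOptimum (Function.update s i s')
  · simp [ht, hs.SW_eq ht]
  · simp [ht, AF, div_le_iff₀ (sub_pos.2 (hs.SW_lt ht))]

theorem selfish_iff_exists_stableOptimum :
    G.Selfish α ↔ ∃ s, G.StableOptimum s ∧ ∀ (i : Fin n) (s' : G.S i),
      ¬G.SocialOptimum (Function.update s i s') → G.AF s i s' ≤ α :=
  ⟨fun ⟨s, hnash, hs⟩ => ⟨s, hs.nashEq_alt_iff.1 hnash⟩,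
    fun ⟨s, hs⟩ => ⟨s, hs.1.1.nashEq_alt_iff.2 hs, hs.1.1⟩⟩

theorem stableOptimum_iff_of_unique (h : ∀ t, G.SocialOptimum t ↔ t = s)
    {t : ∀ j, G.S j} : G.StableOptimum t ↔ t = s := by
  refine ⟨fun ht => (h t).1 ht.1, ?_⟩
  rintro rfl
  exact ⟨(h t).2 rfl, fun i s' hs' => (congrArg (G.p i) ((h _).1 hs')).le⟩

theorem selfish_iff_of_unique (h : ∀ t, G.SocialOptimum t ↔ t = s) :
    G.Selfish α ↔ ∀ (i : Fin n) (s' : G.S i), s' ≠ s i → G.AF s i s' ≤ α := by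
  simp only [selfish_iff_exists_stableOptimum, stableOptimum_iff_of_unique h, exists_eq_left, h,
    Function.update_eq_self_iff, ne_eq]

theorem selfishnessLevel_eq_ofReal_of_isLeast (h : IsLeast {α : ℝ | 0 ≤ α ∧ G.Selfish α} c) :
    G.selfishnessLevel = ENNReal.ofReal c := by
  refine IsLeast.csInf_eq ⟨⟨c, h.1.1, h.1.2, rfl⟩, ?_⟩
  rintro _ ⟨α, hα, hself, rfl⟩
  exact ENNReal.ofReal_le_ofReal (h.2 ⟨hα, hself⟩)

end Game

namespace prisonersDilemma

variable {n : ℕ} {α : ℝ}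

theorem p_eq (s : Fin n → Fin 2) (i : Fin n) :
    (prisonersDilemma n).p i s = 1 + 2 * ∑ j, ((s j : ℕ) : ℝ) - 3 * ((s i : ℕ) : ℝ) := by
  rw [← add_sum_erase univ (fun j => ((s j : ℕ) : ℝ)) (mem_univ i)]
  simp only [prisonersDilemma]
  ring

theorem SW_eq (s : Fin n → Fin 2) :
    (prisonersDilemma n).SW s = n + (2 * n - 3) * ∑ j, ((s j : ℕ) : ℝ) := by
  simp only [Game.SW, p_eq, sum_sub_distrib, sum_const, card_univ, Fintype.card_fin, nsmul_eq_mul,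
    ← mul_sum]
  ring

theorem AF_eq (s : Fin n → Fin 2) (i : Fin n) {a : Fin 2} (ha : a ≠ s i) :
    (prisonersDilemma n).AF s i a = 1 / (2 * n - 3) := by
  have hne : ((s i : ℕ) : ℝ) - ((a : ℕ) : ℝ) ≠ 0 :=
    sub_ne_zero.2 fun h => ha (Fin.ext (Nat.cast_injective h).symm)
  have hgain : (prisonersDilemma n).p i (Function.update s i a : Fin n → Fin 2) -
      (prisonersDilemma n).p i s = ((s i : ℕ) : ℝ) - ((a : ℕ) : ℝ) := by
    rw [p_eq, p_eq, sum_comp_update (fun b : Fin 2 => ((b : ℕ) : ℝ)), Function.update_self]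
    ring
  have hloss : (prisonersDilemma n).SW s -
      (prisonersDilemma n).SW (Function.update s i a : Fin n → Fin 2) =
        (2 * n - 3) * (((s i : ℕ) : ℝ) - ((a : ℕ) : ℝ)) := by
    rw [SW_eq, SW_eq, sum_comp_update (fun b : Fin 2 => ((b : ℕ) : ℝ))]
    ring
  calc (prisonersDilemma n).AF s i a
    _ = (((s i : ℕ) : ℝ) - ((a : ℕ) : ℝ)) /
          ((2 * n - 3) * (((s i : ℕ) : ℝ) - ((a : ℕ) : ℝ))) := congrArg₂ (· / ·) hgain hloss
    _ = 1 / (2 * n - 3) := by rw [div_mul_cancel_right₀ hne, one_div]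

theorem two_mul_sub_three_pos (hn : 2 ≤ n) : (0 : ℝ) < 2 * n - 3 := by
  have : (2 : ℝ) ≤ n := by exact_mod_cast hn
  linarith

theorem SW_strictMono (hn : 2 ≤ n) :
    StrictMono fun s : Fin n → Fin 2 => (prisonersDilemma n).SW s := by
  intro s t hst
  have hsum : ∑ j, ((s j : ℕ) : ℝ) < ∑ j, ((t j : ℕ) : ℝ) := by
    obtain ⟨hle, i, hlt⟩ := Pi.lt_def.1 hst
    exact sum_lt_sum (fun j _ => by exact_mod_cast hle j) ⟨i, mem_univ i, by exact_mod_cast hlt⟩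
  simp only [SW_eq]
  gcongr
  exact two_mul_sub_three_pos hn

theorem socialOptimum_iff_eq_top (hn : 2 ≤ n) (s : Fin n → Fin 2) :
    (prisonersDilemma n).SocialOptimum s ↔ s = ⊤ := by
  constructor
  · intro hs
    by_contra hne
    exact (hs (⊤ : Fin n → Fin 2)).not_gt (SW_strictMono hn (lt_top_iff_ne_top.2 hne))
  · rintro rfl
    exact fun t : Fin n → Fin 2 => (SW_strictMono hn).monotone (le_top (a := t))

theorem selfish_iff_one_div_le (hn : 2 ≤ n) :
    (prisonersDilemma n).Selfish α ↔ 1 / (2 * n - 3) ≤ α := by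
  rw [Game.selfish_iff_of_unique (socialOptimum_iff_eq_top hn)]
  refine ⟨fun h => ?_, fun h i a ha => (AF_eq ⊤ i ha).trans_le h⟩
  let i : Fin n := ⟨0, by lia⟩
  have hdefect : (⊥ : Fin 2) ≠ (⊤ : Fin n → Fin 2) i := bot_ne_top
  exact (AF_eq ⊤ i hdefect).symm.trans_le (h i (⊥ : Fin 2) hdefect)

end prisonersDilemma

/-- the selfishness level of the `n`-players Prisoner's Dilemma game
equals `1/(2n - 3)`. -/
theorem selfishnessLevel_prisonersDilemma (n : ℕ) (hn : 2 ≤ n) :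
    (prisonersDilemma n).selfishnessLevel = ENNReal.ofReal (1 / (2 * (n : ℝ) - 3)) := by
  have hpos := one_div_pos.2 (prisonersDilemma.two_mul_sub_three_pos hn)
  exact Game.selfishnessLevel_eq_ofReal_of_isLeast
    ⟨⟨hpos.le, (prisonersDilemma.selfish_iff_one_div_le hn).2 le_rfl⟩,
      fun _ hα => (prisonersDilemma.selfish_iff_one_div_le hn).1 hα.2⟩
end
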